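/- Fix σ > 0, α ∈ (0,1), and let z_α = Φ⁻¹(α) where Φ is the standard normal CDF. For each m ∈ ℕ let θ_m ∈ ℝ, let ν_m denote the gaussian(θ_m, σ²) measure on ℝ, and let T_m ⊆ ℝ be a Lebesgue-measurable set with ν_m(T_m) → 1 as m → ∞. Let u_m : ℝ → ℝ be measurable functions such that F_TN(y; u_m(y), σ², T_m) = 1 − α for every y ∈ T_m. Then for every ε > 0, ν_m({y ∈ T_m : |u_m(y) − (y + z_α σ)| > ε}) / ν_m(T_m) → 0 as m → ∞; that is, conditional on the truncation event, the quantile conditionally unbiased estimator converges in probability to the conventional (unconditional) quantile estimator y + z_α σ. -/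

import Mathlib

/-!
The truncated normal law is the normal law conditioned on `T`, so `F_TN(y; μ, σ², T)` differs from
`Φ((y - μ) / σ)` by at most the `N(μ, σ²)`-mass of `Tᶜ`, and the monotone likelihood ratio of the
normal family makes it antitone in `μ`. Comparing `μ = y + z_α σ ± ε` with the solution `u(y)`, the
strict monotonicity of `Φ` forces `|u(y) - (y + z_α σ)| ≤ ε` once `Tᶜ` has small mass under all
means near `y + z_α σ`. By Cauchy–Schwarz, small mass of `Tᶜ` under `N(θ, σ²)` gives small mass
under `N(μ, σ²)`, uniformly over bounded `|μ - θ|`; by Chebyshev, `y` stays within a bounded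
distance of `θ` outside an event of small probability.
-/

open MeasureTheory ProbabilityTheory Filter

/-- The truncated normal CDF: `F_TN(z; μ, σ², T)` is the Gaussian weight of `T ∩ (-∞, z]`
divided by the Gaussian weight of `T` (with value 0 when the denominator vanishes, matching
the Lean convention `x / 0 = 0`). -/
noncomputable def FTN (z μ σ2 : ℝ) (T : Set ℝ) : ℝ :=
  (∫ t in T ∩ Set.Iic z, Real.exp (-(t - μ) ^ 2 / (2 * σ2))) /
    (∫ t in T, Real.exp (-(t - μ) ^ 2 / (2 * σ2)))

/-- The standard normal CDF `Φ(x) = ∫_{-∞}^{x} (2π)^{-1/2} exp(-t²/2) dt`. -/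
noncomputable def Phi (x : ℝ) : ℝ :=
  ∫ t in Set.Iic x, (Real.sqrt (2 * Real.pi))⁻¹ * Real.exp (-t ^ 2 / 2)

lemma abs_cond_real_sub_real_le {Ω : Type*} [MeasurableSpace Ω] {μ : Measure Ω}
    [IsProbabilityMeasure μ] {A : Set Ω} (hA : MeasurableSet A) (s : Set Ω) :
    |(μ[|s]).real A - μ.real A| ≤ μ.real sᶜ := by
  have hcond : (μ[|s]).real A * μ.real s = μ.real (s ∩ A) := by
    rw [measureReal_def, cond_apply' hA, ENNReal.toReal_mul, ENNReal.toReal_inv]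
    change (μ.real s)⁻¹ * μ.real (s ∩ A) * μ.real s = μ.real (s ∩ A)
    rcases eq_or_ne (μ.real s) 0 with hs | hs
    · have : μ.real (s ∩ A) ≤ μ.real s := measureReal_mono Set.inter_subset_left
      rw [hs, mul_zero]
      linarith [measureReal_nonneg (μ := μ) (s := s ∩ A)]
    · field_simp
  have hcond_le : (μ[|s]).real A ≤ 1 := measureReal_le_one
  have hcond_nonneg : 0 ≤ (μ[|s]).real A := measureReal_nonneg
  have hs_le : μ.real s ≤ 1 := measureReal_le_one
  have hcompl : 1 ≤ μ.real s + μ.real sᶜ := by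
    simpa using measureReal_union_le (μ := μ) s sᶜ
  have hinter_le : μ.real (s ∩ A) ≤ μ.real A := measureReal_mono Set.inter_subset_right
  have hA_le : μ.real A ≤ μ.real (s ∩ A) + μ.real sᶜ := by
    refine (measureReal_mono fun x hx => ?_).trans (measureReal_union_le _ _)
    exact (em (x ∈ s)).imp (⟨·, hx⟩) id
  rw [abs_le]
  constructor <;> nlinarith

lemma tendsto_measureReal_compl_zero {ι Ω : Type*} [MeasurableSpace Ω] {l : Filter ι}
    {μ : ι → Measure Ω} [∀ i, IsProbabilityMeasure (μ i)] {s : ι → Set Ω}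
    (hs : ∀ i, NullMeasurableSet (s i) (μ i)) (h : Tendsto (fun i => μ i (s i)) l (nhds 1)) :
    Tendsto (fun i => (μ i).real (s i)ᶜ) l (nhds 0) := by
  have hreal : Tendsto (fun i => 1 - (μ i).real (s i)) l (nhds (1 - 1)) :=
    ((ENNReal.tendsto_toReal ENNReal.one_ne_top).comp h).const_sub 1
  simpa only [probReal_compl_eq_one_sub₀ (hs _), sub_self] using hreal

section LinearOrder

variable {α : Type*} [MeasurableSpace α] [TopologicalSpace α] [LinearOrder α]
  [OrderClosedTopology α] [OpensMeasurableSpace α] {g : α → ENNReal}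

lemma strictMono_measureReal_Iic [DenselyOrdered α] {μ : Measure α} [IsFiniteMeasure μ]
    [μ.IsOpenPosMeasure] : StrictMono fun x => μ.real (Set.Iic x) := by
  intro a b hab
  have hsplit : μ.real (Set.Iic b) = μ.real (Set.Iic a) + μ.real (Set.Ioc a b) := by
    rw [← measureReal_union (Set.Iic_disjoint_Ioc le_rfl) measurableSet_Ioc,
      Set.Iic_union_Ioc_eq_Iic hab.le]
  have hpos : 0 < μ (Set.Ioc a b) :=
    (isOpen_Ioo.measure_pos μ (Set.nonempty_Ioo.2 hab)).trans_le
      (measure_mono Set.Ioo_subset_Ioc_self)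
  simp only [hsplit]
  exact lt_add_of_pos_right _ (ENNReal.toReal_pos hpos.ne' (measure_ne_top μ _))

lemma withDensity_Iic_mul_le (μ : Measure α) (hg : Monotone g) (y : α) :
    μ.withDensity g (Set.Iic y) * μ Set.univ ≤ μ (Set.Iic y) * μ.withDensity g Set.univ := by
  set ν := μ.withDensity g
  have hIic : ν (Set.Iic y) ≤ g y * μ (Set.Iic y) := by
    rw [withDensity_apply _ measurableSet_Iic, ← setLIntegral_const]
    exact setLIntegral_mono' measurableSet_Iic fun x hx => hg hx
  have hIoi : g y * μ (Set.Ioi y) ≤ ν (Set.Ioi y) := by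
    rw [withDensity_apply _ measurableSet_Ioi, ← setLIntegral_const]
    exact setLIntegral_mono' measurableSet_Ioi fun x hx => hg (le_of_lt hx)
  have hsplit (κ : Measure α) : κ Set.univ = κ (Set.Iic y) + κ (Set.Ioi y) := by
    rw [← measure_add_measure_compl measurableSet_Iic, Set.compl_Iic]
  calc ν (Set.Iic y) * μ Set.univ
      = μ (Set.Iic y) * ν (Set.Iic y) + ν (Set.Iic y) * μ (Set.Ioi y) := by
        rw [hsplit μ]; ring
    _ ≤ μ (Set.Iic y) * ν (Set.Iic y) + (g y * μ (Set.Iic y)) * μ (Set.Ioi y) := by gcongr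
    _ = μ (Set.Iic y) * (ν (Set.Iic y) + g y * μ (Set.Ioi y)) := by ring
    _ ≤ μ (Set.Iic y) * (ν (Set.Iic y) + ν (Set.Ioi y)) := by gcongr
    _ = μ (Set.Iic y) * ν Set.univ := by rw [hsplit ν]

lemma cond_withDensity_Iic_le (μ : Measure α) [IsFiniteMeasure μ] (hg : Monotone g)
    (s : Set α) (y : α) :
    (μ.withDensity g)[|s] (Set.Iic y) ≤ μ[|s] (Set.Iic y) := by
  rw [cond_apply' measurableSet_Iic, cond_apply' measurableSet_Iic]
  rcases eq_or_ne (μ s) 0 with hs | hs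
  · have : μ.withDensity g (s ∩ Set.Iic y) = 0 :=
      withDensity_absolutelyContinuous μ g (measure_mono_null Set.inter_subset_left hs)
    simp [this]
  have hcross := withDensity_Iic_mul_le (μ.restrict s) hg y
  rw [← restrict_withDensity', Measure.restrict_apply measurableSet_Iic,
    Measure.restrict_apply measurableSet_Iic, Measure.restrict_apply_univ,
    Measure.restrict_apply_univ, Set.inter_comm] at hcross
  rw [mul_comm, ← div_eq_mul_inv, mul_comm, ← div_eq_mul_inv]
  refine ENNReal.div_le_of_le_mul ?_
  rw [← ENNReal.mul_div_right_comm]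
  exact (ENNReal.le_div_iff_mul_le (.inl hs) (.inl (measure_ne_top μ s))).2 hcross

end LinearOrder

lemma mk_sq_ne_zero {σ : ℝ} (hσ : σ ≠ 0) : NNReal.mk (σ ^ 2) (sq_nonneg σ) ≠ 0 :=
  fun h => pow_ne_zero 2 hσ (congrArg NNReal.toReal h)

section Gaussian

variable {v : NNReal}

lemma gaussianReal_real_eq_setIntegral (μ : ℝ) (hv : v ≠ 0) (s : Set ℝ) :
    (gaussianReal μ v).real s = ∫ t in s, gaussianPDFReal μ v t := by
  rw [measureReal_def, gaussianReal_apply_eq_integral μ hv, ENNReal.toReal_ofReal]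
  exact integral_nonneg fun t => gaussianPDFReal_nonneg μ v t

lemma gaussianReal_eq_withDensity_gaussianReal (μ θ : ℝ) (hv : v ≠ 0) :
    gaussianReal μ v = (gaussianReal θ v).withDensity fun x =>
      ENNReal.ofReal (Real.exp (((μ - θ) * x - (μ ^ 2 - θ ^ 2) / 2) / v)) := by
  rw [gaussianReal_of_var_ne_zero μ hv, gaussianReal_of_var_ne_zero θ hv,
    ← withDensity_mul _ (measurable_gaussianPDF θ v) (by fun_prop)]
  congr 1 with x
  rw [Pi.mul_apply, gaussianPDF, gaussianPDF, ← ENNReal.ofReal_mul (gaussianPDFReal_nonneg _ _ _)]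
  simp only [gaussianPDFReal, mul_assoc, ← Real.exp_add]
  congr 3
  field_simp
  ring

lemma gaussianPDFReal_eq_exp_mul_sqrt_mul_sqrt (μ θ x : ℝ) (hv : v ≠ 0) :
    gaussianPDFReal μ v x = Real.exp ((μ - θ) ^ 2 / (2 * v)) *
      (√(gaussianPDFReal θ v x) * √(gaussianPDFReal (2 * μ - θ) v x)) := by
  have hprod : gaussianPDFReal θ v x * gaussianPDFReal (2 * μ - θ) v x =
      (Real.exp (-((μ - θ) ^ 2 / (2 * v))) * gaussianPDFReal μ v x) ^ 2 := by
    simp only [gaussianPDFReal, mul_pow, ← Real.exp_nat_mul]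
    rw [mul_mul_mul_comm, ← Real.exp_add, mul_left_comm, ← Real.exp_add]
    congr 1
    · ring
    · congr 1
      push_cast
      field_simp
      ring
  have hnonneg := gaussianPDFReal_nonneg μ v x
  rw [← Real.sqrt_mul (gaussianPDFReal_nonneg θ v x), hprod, Real.sqrt_sq (by positivity),
    ← mul_assoc, ← Real.exp_add, add_neg_cancel, Real.exp_zero, one_mul]

lemma gaussianPDF_eq_exp_mul_rpow_mul_rpow (μ θ x : ℝ) (hv : v ≠ 0) :
    gaussianPDF μ v x = ENNReal.ofReal (Real.exp ((μ - θ) ^ 2 / (2 * v))) *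
      (gaussianPDF θ v x ^ (1 / 2 : ℝ) * gaussianPDF (2 * μ - θ) v x ^ (1 / 2 : ℝ)) := by
  simp only [gaussianPDF, ENNReal.ofReal_rpow_of_nonneg (gaussianPDFReal_nonneg _ _ _)
    one_half_pos.le, ← Real.sqrt_eq_rpow]
  rw [← ENNReal.ofReal_mul (by positivity), ← ENNReal.ofReal_mul (by positivity),
    ← gaussianPDFReal_eq_exp_mul_sqrt_mul_sqrt μ θ x hv]

lemma gaussianReal_le_exp_mul_rpow (μ θ : ℝ) (hv : v ≠ 0) (s : Set ℝ) :
    gaussianReal μ v s ≤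
      ENNReal.ofReal (Real.exp ((μ - θ) ^ 2 / (2 * v))) * gaussianReal θ v s ^ (1 / 2 : ℝ) := by
  set C := ENNReal.ofReal (Real.exp ((μ - θ) ^ 2 / (2 * v)))
  calc gaussianReal μ v s
      = C * ∫⁻ x in s,
          gaussianPDF θ v x ^ (1 / 2 : ℝ) * gaussianPDF (2 * μ - θ) v x ^ (1 / 2 : ℝ) := by
        rw [gaussianReal_apply μ hv, ← lintegral_const_mul' _ _ ENNReal.ofReal_ne_top]
        simp only [gaussianPDF_eq_exp_mul_rpow_mul_rpow μ θ _ hv]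
    _ ≤ C * (gaussianReal θ v s ^ (1 / 2 : ℝ) * gaussianReal (2 * μ - θ) v s ^ (1 / 2 : ℝ)) := by
        rw [gaussianReal_apply θ hv, gaussianReal_apply (2 * μ - θ) hv]
        gcongr
        exact ENNReal.lintegral_mul_norm_pow_le (measurable_gaussianPDF _ _).aemeasurable
          (measurable_gaussianPDF _ _).aemeasurable one_half_pos.le one_half_pos.le (add_halves 1)
    _ ≤ C * (gaussianReal θ v s ^ (1 / 2 : ℝ) * 1) := by
        gcongr
        exact ENNReal.rpow_le_one prob_le_one one_half_pos.le
    _ = C * gaussianReal θ v s ^ (1 / 2 : ℝ) := by rw [mul_one]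

lemma gaussianReal_real_le_exp_mul_sqrt (μ θ : ℝ) (hv : v ≠ 0) (s : Set ℝ) :
    (gaussianReal μ v).real s ≤
      Real.exp ((μ - θ) ^ 2 / (2 * v)) * √((gaussianReal θ v).real s) := by
  have hreal := ENNReal.toReal_mono (by finiteness) (gaussianReal_le_exp_mul_rpow μ θ hv s)
  rwa [ENNReal.toReal_mul, ENNReal.toReal_ofReal (by positivity), ← ENNReal.toReal_rpow,
    ← Real.sqrt_eq_rpow] at hreal

lemma eventually_gaussianReal_real_lt {ι : Type*} {l : Filter ι} {θ : ι → ℝ} {s : ι → Set ℝ}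
    (hv : v ≠ 0) (hs : Tendsto (fun i => (gaussianReal (θ i) v).real (s i)) l (nhds 0))
    (M : ℝ) {δ : ℝ} (hδ : 0 < δ) :
    ∀ᶠ i in l, ∀ μ, |μ - θ i| ≤ M → (gaussianReal μ v).real (s i) < δ := by
  have hbound : Tendsto (fun i => Real.exp (M ^ 2 / (2 * v)) * √((gaussianReal (θ i) v).real (s i)))
      l (nhds 0) := by
    simpa using hs.sqrt.const_mul (Real.exp (M ^ 2 / (2 * v)))
  filter_upwards [hbound.eventually_lt_const hδ] with i hi μ hμ
  refine (gaussianReal_real_le_exp_mul_sqrt μ (θ i) hv (s i)).trans_lt (lt_of_le_of_lt ?_ hi)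
  have : (μ - θ i) ^ 2 ≤ M ^ 2 := sq_le_sq' (neg_le_of_abs_le hμ) (le_of_abs_le hμ)
  gcongr

lemma exists_gaussianReal_tail_le (v : NNReal) {e : ENNReal} (he : 0 < e) :
    ∃ K, ∀ θ, gaussianReal θ v {y | K ≤ |y - θ|} ≤ e := by
  have hlim : Tendsto (fun K : ℝ => ENNReal.ofReal (v / K ^ 2)) atTop (nhds 0) := by
    rw [← ENNReal.ofReal_zero]
    exact ENNReal.tendsto_ofReal
      (tendsto_const_nhds.div_atTop (tendsto_pow_atTop two_ne_zero))
  obtain ⟨K, hK, hKe⟩ := ((eventually_gt_atTop 0).and (hlim.eventually_le_const he)).exists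
  refine ⟨K, fun θ => le_trans ?_ hKe⟩
  simpa [variance_id_gaussianReal] using
    meas_ge_le_variance_div_sq (memLp_id_gaussianReal (μ := θ) (v := v) 2) hK

end Gaussian

section NormalCDF

lemma Phi_eq_gaussianReal_real_Iic (x : ℝ) : Phi x = (gaussianReal 0 1).real (Set.Iic x) := by
  rw [gaussianReal_real_eq_setIntegral _ one_ne_zero, Phi]
  simp [gaussianPDFReal]

lemma Phi_strictMono : StrictMono Phi := by
  have := (gaussianReal_absolutelyContinuous' 0 one_ne_zero).isOpenPosMeasure
  simpa only [funext Phi_eq_gaussianReal_real_Iic] using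
    strictMono_measureReal_Iic (μ := gaussianReal 0 1)

lemma Phi_neg (x : ℝ) : Phi (-x) = 1 - Phi x := by
  have := nullSingletonClass_gaussianReal (μ := 0) (v := 1) one_ne_zero
  calc Phi (-x) = ((gaussianReal 0 1).map (fun t => -t)).real (Set.Iic (-x)) := by
        rw [gaussianReal_map_neg, neg_zero, Phi_eq_gaussianReal_real_Iic]
    _ = (gaussianReal 0 1).real (Set.Ici x) := by
        rw [map_measureReal_apply measurable_neg measurableSet_Iic]
        simp
    _ = (gaussianReal 0 1).real (Set.Iic x)ᶜ := by
        rw [Set.compl_Iic, measureReal_congr Ioi_ae_eq_Ici]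
    _ = 1 - Phi x := by
        rw [probReal_compl_eq_one_sub measurableSet_Iic, Phi_eq_gaussianReal_real_Iic]

lemma gaussianReal_real_Iic {σ : ℝ} (hσ : 0 < σ) (μ y : ℝ) :
    (gaussianReal μ (.mk (σ ^ 2) (sq_nonneg σ))).real (Set.Iic y) = Phi ((y - μ) / σ) := by
  have hmap : gaussianReal μ (.mk (σ ^ 2) (sq_nonneg σ)) =
      (gaussianReal 0 1).map (fun t => σ * t + μ) := by
    rw [← Function.comp_def (· + μ) (σ * ·), ← Measure.map_map (by fun_prop) (by fun_prop),
      gaussianReal_map_const_mul, gaussianReal_map_add_const, mul_zero, zero_add, mul_one]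
  rw [hmap, map_measureReal_apply (by fun_prop) measurableSet_Iic, Phi_eq_gaussianReal_real_Iic]
  congr 1 with t
  rw [Set.mem_preimage, Set.mem_Iic, Set.mem_Iic, le_div_iff₀ hσ, le_sub_iff_add_le, mul_comm]

end NormalCDF

section TruncatedNormal

variable {v : NNReal}

lemma FTN_eq_cond_gaussianReal (hv : v ≠ 0) (y μ : ℝ) (T : Set ℝ) :
    FTN y μ v T = ((gaussianReal μ v)[|T]).real (Set.Iic y) := by
  rw [measureReal_def, cond_apply' measurableSet_Iic, ENNReal.toReal_mul, ENNReal.toReal_inv,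
    ← measureReal_def, ← measureReal_def, inv_mul_eq_div,
    gaussianReal_real_eq_setIntegral μ hv, gaussianReal_real_eq_setIntegral μ hv]
  simp only [gaussianPDFReal, integral_const_mul, FTN]
  rw [mul_div_mul_left _ _ (by positivity)]

lemma FTN_antitone (hv : v ≠ 0) (y : ℝ) (T : Set ℝ) : Antitone fun μ => FTN y μ v T := by
  intro θ μ hle
  have hmono : Monotone fun x : ℝ =>
      ENNReal.ofReal (Real.exp (((μ - θ) * x - (μ ^ 2 - θ ^ 2) / 2) / v)) := by
    have := sub_nonneg.2 hle
    intro a b hab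
    dsimp only
    gcongr
  simp only [FTN_eq_cond_gaussianReal hv]
  rw [gaussianReal_eq_withDensity_gaussianReal μ θ hv]
  exact ENNReal.toReal_mono (measure_ne_top _ _) (cond_withDensity_Iic_le _ hmono T y)

lemma abs_FTN_sub_Phi_le {σ : ℝ} (hσ : 0 < σ) (y μ : ℝ) (T : Set ℝ) :
    |FTN y μ (σ ^ 2) T - Phi ((y - μ) / σ)| ≤
      (gaussianReal μ (.mk (σ ^ 2) (sq_nonneg σ))).real Tᶜ := by
  rw [← gaussianReal_real_Iic hσ]
  exact FTN_eq_cond_gaussianReal (mk_sq_ne_zero hσ.ne') y μ T ▸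
    abs_cond_real_sub_real_le measurableSet_Iic T

lemma exists_abs_sub_le_of_FTN_eq {σ ε : ℝ} (hσ : 0 < σ) (hε : 0 < ε) (z : ℝ) :
    ∃ δ > 0, ∀ (y u : ℝ) (T : Set ℝ),
      (∀ μ, |μ - (y + z * σ)| ≤ ε → (gaussianReal μ (.mk (σ ^ 2) (sq_nonneg σ))).real Tᶜ < δ) →
      FTN y u (σ ^ 2) T = 1 - Phi z → |u - (y + z * σ)| ≤ ε := by
  have hεσ : 0 < ε / σ := div_pos hε hσ
  have hlower : Phi (-z - ε / σ) < Phi (-z) := Phi_strictMono (by linarith)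
  have hupper : Phi (-z) < Phi (-z + ε / σ) := Phi_strictMono (by linarith)
  refine ⟨min (Phi (-z) - Phi (-z - ε / σ)) (Phi (-z + ε / σ) - Phi (-z)),
    lt_min (sub_pos.2 hlower) (sub_pos.2 hupper), fun y u T hT hu => ?_⟩
  have hanti : Antitone fun μ => FTN y μ (σ ^ 2) T := FTN_antitone (mk_sq_ne_zero hσ.ne') y T
  rw [← Phi_neg] at hu
  rw [abs_le]
  constructor
  · by_contra! hlt
    have hclose := abs_le.1 (abs_FTN_sub_Phi_le hσ y (y + z * σ - ε) T)
    have hsmall := lt_min_iff.1 (hT (y + z * σ - ε) (by simp [abs_of_pos hε]))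
    have hle : FTN y (y + z * σ - ε) (σ ^ 2) T ≤ FTN y u (σ ^ 2) T := hanti (by linarith)
    rw [show (y - (y + z * σ - ε)) / σ = -z + ε / σ by field_simp; ring] at hclose
    linarith
  · by_contra! hlt
    have hclose := abs_le.1 (abs_FTN_sub_Phi_le hσ y (y + z * σ + ε) T)
    have hsmall := lt_min_iff.1 (hT (y + z * σ + ε) (by simp [abs_of_pos hε]))
    have hle : FTN y u (σ ^ 2) T ≤ FTN y (y + z * σ + ε) (σ ^ 2) T := hanti (by linarith)
    rw [show (y - (y + z * σ + ε)) / σ = -z - ε / σ by field_simp; ring] at hclose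
    linarith

end TruncatedNormal

theorem stmt15_general {ι : Type*} {l : Filter ι} {σ : ℝ} (hσ : 0 < σ) (z : ℝ) {θ : ι → ℝ}
    {T : ι → Set ℝ} (hT : ∀ i, NullMeasurableSet (T i))
    (hTprob : Tendsto (fun i => gaussianReal (θ i) (.mk (σ ^ 2) (sq_nonneg σ)) (T i)) l (nhds 1))
    {u : ι → ℝ → ℝ} (hu : ∀ i, ∀ y ∈ T i, FTN y (u i y) (σ ^ 2) (T i) = 1 - Phi z) :
    ∀ ε > (0 : ℝ), Tendsto
      (fun i => gaussianReal (θ i) (.mk (σ ^ 2) (sq_nonneg σ))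
          {y ∈ T i | ε < |u i y - (y + z * σ)|} /
        gaussianReal (θ i) (.mk (σ ^ 2) (sq_nonneg σ)) (T i))
      l (nhds 0) := by
  intro ε hε
  set ν := fun i => gaussianReal (θ i) (.mk (σ ^ 2) (sq_nonneg σ))
  have hv := mk_sq_ne_zero hσ.ne'
  have hcompl : Tendsto (fun i => (ν i).real (T i)ᶜ) l (nhds 0) :=
    tendsto_measureReal_compl_zero
      (fun i => (hT i).mono_ac (gaussianReal_absolutelyContinuous _ hv)) hTprob
  suffices hnum : Tendsto (fun i => ν i {y ∈ T i | ε < |u i y - (y + z * σ)|}) l (nhds 0) by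
    simpa using ENNReal.Tendsto.div hnum (.inr one_ne_zero) hTprob (.inl ENNReal.one_ne_top)
  obtain ⟨δ, hδ, hclose⟩ := exists_abs_sub_le_of_FTN_eq hσ hε z
  refine ENNReal.tendsto_nhds_zero.2 fun e he => ?_
  obtain ⟨K, hK⟩ := exists_gaussianReal_tail_le (.mk (σ ^ 2) (sq_nonneg σ)) he
  filter_upwards [eventually_gaussianReal_real_lt hv hcompl (ε + |z * σ| + K) hδ] with i hi
  refine (measure_mono ?_).trans (hK (θ i))
  rintro y ⟨hyT, hy⟩
  contrapose! hy
  refine hclose y (u i y) (T i) (fun μ hμ => hi μ ?_) (hu i y hyT)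
  rw [Set.mem_ofPred_eq, not_le] at hy
  calc |μ - θ i| = |(μ - (y + z * σ)) + z * σ + (y - θ i)| := by ring_nf
    _ ≤ |μ - (y + z * σ)| + |z * σ| + |y - θ i| := abs_add_three _ _ _
    _ ≤ ε + |z * σ| + K := by gcongr

/-- High-probability deviations yield conventional inference: if the
`N(θ m, σ²)` probability of the truncation set `T m` tends to one, and `u m y` is the
quantile conditionally unbiased estimator solving `F_TN(y; u m y, σ², T m) = 1 - α` for
`y ∈ T m`, then conditional on the truncation event, `u m` converges in probability to the
conventional estimator `y + z_α σ`, where `Φ(z_α) = α`. -/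
theorem stmt15 (σ : ℝ) (hσ : 0 < σ) (α : ℝ) (hα : α ∈ Set.Ioo (0 : ℝ) 1)
    (zα : ℝ) (hzα : Phi zα = α)
    (θ : ℕ → ℝ) (T : ℕ → Set ℝ) (hT : ∀ m, MeasurableSet (T m))
    (hTprob : Tendsto
      (fun m => gaussianReal (θ m) ⟨σ ^ 2, sq_nonneg σ⟩ (T m)) atTop (nhds 1))
    (u : ℕ → ℝ → ℝ) (humeas : ∀ m, Measurable (u m))
    (hu : ∀ m, ∀ y ∈ T m, FTN y (u m y) (σ ^ 2) (T m) = 1 - α) :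
    ∀ ε > (0 : ℝ), Tendsto
      (fun m => gaussianReal (θ m) ⟨σ ^ 2, sq_nonneg σ⟩
          {y ∈ T m | ε < |u m y - (y + zα * σ)|} /
        gaussianReal (θ m) ⟨σ ^ 2, sq_nonneg σ⟩ (T m))
      atTop (nhds 0) := by
  subst hzα
  exact stmt15_general hσ zα (fun m => (hT m).nullMeasurableSet) hTprob hu
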